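/- arXiv:2111.11828 — 4 statements merged into one kernel-verified Lean document; each statement's English description precedes it below -/
import Mathlib

section
/- Single-sample Discover variance bound: for any θ ∈ ℝ^d and fixed buffers g^{(1)},…,g^{(N)} ∈ ℝ^d, if (n,x) is a sample from the joint distribution Q(n,dx) = p_n ℙ_n(dx), then E[‖D(n,x) − ḡ(θ)‖²] ≤ C₁‖θ − θ*‖² + ∑_{n=1}^N p_n σ_n² + 2·∑_{n=1}^N p_n ‖g^{(n)} − g_n(θ*)‖², where C₁ = 4δ² and σ_n² = 2·E_{x∼ℙ_n}[‖g(x,θ*)‖²]. -/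
open MeasureTheory Finset
open scoped NNReal

/-!
The estimator `D` is unbiased, so `ḡ(θ)` is the constant closest to `D` in mean square. Replacing
it by the buffer average cancels the same term in `D` and leaves
`E‖D − ḡ(θ)‖² ≤ ∑ p_n E_n‖g(x,θ) − g⁽ⁿ⁾‖²`. In each cluster, passing from `θ` to `θ*` costs a
factor `2` and the Lipschitz term `2δ²‖θ − θ*‖²`, and `E_n‖g(x,θ*) − g⁽ⁿ⁾‖²` splits into the
variance of `g(x,θ*)`, at most its second moment, and the squared bias `‖g_n(θ*) − g⁽ⁿ⁾‖²`.
-/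

section MeanSquare

open scoped ProbabilityTheory

variable {Ω E : Type*} [MeasurableSpace Ω] {μ : Measure Ω} [IsProbabilityMeasure μ]
  [NormedAddCommGroup E] [InnerProductSpace ℝ E] [CompleteSpace E] {f : Ω → E}

theorem integral_norm_sub_sq_eq_variance_add_bias_sq (hf : MemLp f 2 μ) (c : E) :
    ∫ ω, ‖f ω - c‖ ^ 2 ∂μ = ∫ ω, ‖f ω - μ[f]‖ ^ 2 ∂μ + ‖μ[f] - c‖ ^ 2 := by
  have hf_int : Integrable f μ := hf.integrable one_le_two
  have hdev_int : Integrable (fun ω => f ω - μ[f]) μ := hf_int.sub (integrable_const _)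
  have hdev_mean : ∫ ω, (f ω - μ[f]) ∂μ = 0 := by
    rw [integral_sub hf_int (integrable_const _), integral_const, probReal_univ, one_smul, sub_self]
  have hdev_sq_int : Integrable (fun ω => ‖f ω - μ[f]‖ ^ 2) μ :=
    (hf.sub (memLp_const _)).integrable_norm_pow two_ne_zero
  have hcross_int : Integrable (fun ω => 2 * inner ℝ (μ[f] - c) (f ω - μ[f])) μ :=
    (hdev_int.const_inner _).const_mul 2
  have hcross : ∫ ω, 2 * inner ℝ (μ[f] - c) (f ω - μ[f]) ∂μ = 0 := by
    rw [integral_const_mul, integral_inner hdev_int, hdev_mean, inner_zero_right, mul_zero]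
  have hexpand (ω : Ω) : ‖f ω - c‖ ^ 2 =
      ‖f ω - μ[f]‖ ^ 2 + 2 * inner ℝ (μ[f] - c) (f ω - μ[f]) + ‖μ[f] - c‖ ^ 2 := by
    rw [← sub_add_sub_cancel (f ω) (μ[f]) c, norm_add_sq_real, real_inner_comm]
  simp_rw [hexpand]
  rw [integral_add (hdev_sq_int.fun_add hcross_int) (integrable_const _),
    integral_add hdev_sq_int hcross_int, hcross, add_zero, integral_const, probReal_univ, one_smul]

theorem integral_norm_sub_integral_sq_le (hf : MemLp f 2 μ) (c : E) :
    ∫ ω, ‖f ω - μ[f]‖ ^ 2 ∂μ ≤ ∫ ω, ‖f ω - c‖ ^ 2 ∂μ := by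
  rw [integral_norm_sub_sq_eq_variance_add_bias_sq hf c]
  exact le_add_of_nonneg_right (sq_nonneg _)

theorem integral_norm_sub_sq_le_second_moment_add_bias_sq (hf : MemLp f 2 μ) (c : E) :
    ∫ ω, ‖f ω - c‖ ^ 2 ∂μ ≤ ∫ ω, ‖f ω‖ ^ 2 ∂μ + ‖μ[f] - c‖ ^ 2 := by
  rw [integral_norm_sub_sq_eq_variance_add_bias_sq hf c]
  simpa using integral_norm_sub_integral_sq_le hf 0

end MeanSquare

section Lipschitz

variable {X Θ E : Type*} [MeasurableSpace X] [PseudoMetricSpace Θ] [NormedAddCommGroup E]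
  {μ : Measure X} {g : X → Θ → E} {δ : ℝ≥0} {θ θ' : Θ}

theorem memLp_of_ae_lipschitzWith [IsFiniteMeasure μ] {q : ENNReal}
    (hLip : ∀ᵐ x ∂μ, LipschitzWith δ (g x)) (hθ : AEStronglyMeasurable (g · θ) μ)
    (hθ' : MemLp (g · θ') q μ) : MemLp (g · θ) q μ := by
  have hdiff : MemLp ((g · θ) - (g · θ')) q μ := by
    refine .of_bound (hθ.sub hθ'.aestronglyMeasurable) (δ * dist θ θ') ?_
    filter_upwards [hLip] with x hx
    exact (dist_eq_norm (g x θ) (g x θ')).symm.trans_le (hx.dist_le_mul θ θ')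
  simpa using hdiff.add hθ'

theorem integral_norm_sub_sq_le_of_ae_lipschitzWith [IsProbabilityMeasure μ]
    (hLip : ∀ᵐ x ∂μ, LipschitzWith δ (g x)) (hθ' : MemLp (g · θ') 2 μ) (c : E) :
    ∫ x, ‖g x θ - c‖ ^ 2 ∂μ ≤ 2 * (δ * dist θ θ') ^ 2 + 2 * ∫ x, ‖g x θ' - c‖ ^ 2 ∂μ := by
  have hsq_int : Integrable (fun x => 2 * ‖g x θ' - c‖ ^ 2) μ :=
    ((hθ'.sub (memLp_const c)).integrable_norm_pow two_ne_zero).const_mul 2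
  have hpointwise : ∀ᵐ x ∂μ,
      ‖g x θ - c‖ ^ 2 ≤ 2 * (δ * dist θ θ') ^ 2 + 2 * ‖g x θ' - c‖ ^ 2 := by
    filter_upwards [hLip] with x hx
    calc ‖g x θ - c‖ ^ 2
        ≤ (dist (g x θ) (g x θ') + ‖g x θ' - c‖) ^ 2 := by
          rw [dist_eq_norm]; gcongr; exact norm_sub_le_norm_sub_add_norm_sub _ _ _
      _ ≤ (δ * dist θ θ' + ‖g x θ' - c‖) ^ 2 := by gcongr; exact hx.dist_le_mul θ θ'
      _ ≤ 2 * (δ * dist θ θ') ^ 2 + 2 * ‖g x θ' - c‖ ^ 2 := add_sq_le.trans_eq (mul_add _ _ _)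
  calc ∫ x, ‖g x θ - c‖ ^ 2 ∂μ
      ≤ ∫ x, (2 * (δ * dist θ θ') ^ 2 + 2 * ‖g x θ' - c‖ ^ 2) ∂μ :=
        integral_mono_of_nonneg (.of_forall fun x => sq_nonneg _)
          ((integrable_const _).add hsq_int) hpointwise
    _ = 2 * (δ * dist θ θ') ^ 2 + 2 * ∫ x, ‖g x θ' - c‖ ^ 2 ∂μ := by
        rw [integral_add (integrable_const _) hsq_int, integral_const, probReal_univ, one_smul,
          integral_const_mul]

end Lipschitz

section ClusterMixture

variable {ι X E : Type*} [Fintype ι] [MeasurableSpace ι] [MeasurableSpace X]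
  {p : ι → ℝ} {P : ι → Measure X}

/-- The joint law `Q(n, dx) = p_n ℙ_n(dx)` of a cluster index and a sample from that cluster.
Negative weights are truncated to `0`. -/
noncomputable def clusterMixture (p : ι → ℝ) (P : ι → Measure X) : Measure (ι × X) :=
  ∑ n, ENNReal.ofReal (p n) • (P n).map (Prod.mk n)

theorem isProbabilityMeasure_clusterMixture [∀ n, IsProbabilityMeasure (P n)]
    (hp : ∀ n, 0 ≤ p n) (hpsum : ∑ n, p n = 1) : IsProbabilityMeasure (clusterMixture p P) := by
  have hmap (n : ι) : (P n).map (Prod.mk n) Set.univ = 1 := by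
    rw [Measure.map_apply measurable_prodMk_left .univ, Set.preimage_univ, measure_univ]
  constructor
  simp only [clusterMixture, Measure.finsetSum_apply, Measure.smul_apply, hmap, smul_eq_mul,
    mul_one]
  rw [← ENNReal.ofReal_sum_of_nonneg fun n _ => hp n, hpsum, ENNReal.ofReal_one]

variable [MeasurableSingletonClass ι] [NormedAddCommGroup E] {f : ι × X → E}

theorem integrable_clusterMixture (hf : ∀ n, Integrable (fun x => f (n, x)) (P n)) :
    Integrable f (clusterMixture p P) :=
  integrable_finsetSum_measure.2 fun n _ =>
    ((measurableEmbedding_prodMk_left n).integrable_map_iff.2 (hf n)).smul_measure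
      ENNReal.ofReal_ne_top

theorem memLp_clusterMixture {q : ENNReal} (hq_zero : q ≠ 0) (hq_top : q ≠ ⊤)
    (hf : ∀ n, MemLp (fun x => f (n, x)) q (P n)) : MemLp f q (clusterMixture p P) := by
  have hf_meas : AEStronglyMeasurable f (clusterMixture p P) := by
    rw [clusterMixture, ← Measure.sum_fintype]
    exact .sum_measure fun n =>
      ((measurableEmbedding_prodMk_left n).aestronglyMeasurable_map_iff.2
        (hf n).aestronglyMeasurable).smul_measure _
  rw [← integrable_norm_rpow_iff hf_meas hq_zero hq_top]
  exact integrable_clusterMixture fun n => (hf n).integrable_norm_rpow hq_zero hq_top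

theorem integral_clusterMixture [NormedSpace ℝ E] (hp : ∀ n, 0 ≤ p n)
    (hf : ∀ n, Integrable (fun x => f (n, x)) (P n)) :
    ∫ z, f z ∂clusterMixture p P = ∑ n, p n • ∫ x, f (n, x) ∂P n := by
  have hf_mix : Integrable f (clusterMixture p P) := integrable_clusterMixture hf
  rw [clusterMixture, integral_finsetSum_measure (integrable_finsetSum_measure.1 hf_mix)]
  refine sum_congr rfl fun n _ => ?_
  rw [integral_smul_measure, (measurableEmbedding_prodMk_left n).integral_map,
    ENNReal.toReal_ofReal (hp n)]

end ClusterMixture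

section Discover

/-- The per-sample Discover estimator `D(n, x) = h(x) − b_n + ∑ k, p_k b_k` for the sample gradient
`h = g(·, θ)` at a fixed parameter and the cluster buffers `b`. -/
def discoverEstimator {ι X E : Type*} [Fintype ι] [AddCommGroup E] [Module ℝ E]
    (p : ι → ℝ) (h : X → E) (b : ι → E) (z : ι × X) : E :=
  h z.2 - b z.1 + ∑ k, p k • b k

variable {ι X E : Type*} [Fintype ι] [MeasurableSpace ι] [MeasurableSingletonClass ι]
  [MeasurableSpace X] [NormedAddCommGroup E] [CompleteSpace E] {p : ι → ℝ} {P : ι → Measure X}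
  [∀ n, IsProbabilityMeasure (P n)] {h : X → E}

theorem integral_discoverEstimator [NormedSpace ℝ E] (hp : ∀ n, 0 ≤ p n)
    (hpsum : ∑ n, p n = 1) (hh : ∀ n, Integrable h (P n)) (b : ι → E) :
    ∫ z, discoverEstimator p h b z ∂clusterMixture p P = ∑ n, p n • ∫ x, h x ∂P n := by
  have hcluster_int (n : ι) : Integrable (fun x => h x - b n) (P n) :=
    (hh n).sub (integrable_const _)
  have hcluster (n : ι) : ∫ x, discoverEstimator p h b (n, x) ∂P n =
      ∫ x, h x ∂P n - b n + ∑ k, p k • b k := by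
    simp only [discoverEstimator]
    rw [integral_add (hcluster_int n) (integrable_const _),
      integral_sub (hh n) (integrable_const _)]
    simp
  rw [integral_clusterMixture hp fun n => (hcluster_int n).add (integrable_const _)]
  simp_rw [hcluster, smul_add, smul_sub]
  rw [sum_add_distrib, sum_sub_distrib, ← sum_smul, hpsum, one_smul, sub_add_cancel]

variable [InnerProductSpace ℝ E]

theorem integral_norm_discoverEstimator_sub_mean_sq_le (hp : ∀ n, 0 ≤ p n)
    (hpsum : ∑ n, p n = 1) (hh : ∀ n, MemLp h 2 (P n)) (b : ι → E) :
    ∫ z, ‖discoverEstimator p h b z - ∑ n, p n • ∫ x, h x ∂P n‖ ^ 2 ∂clusterMixture p P ≤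
      ∑ n, p n * ∫ x, ‖h x - b n‖ ^ 2 ∂P n := by
  have := isProbabilityMeasure_clusterMixture (P := P) hp hpsum
  have hdev (n : ι) : MemLp (fun x => h x - b n) 2 (P n) := (hh n).sub (memLp_const _)
  have hD : MemLp (discoverEstimator p h b) 2 (clusterMixture p P) :=
    memLp_clusterMixture two_ne_zero ENNReal.ofNat_ne_top fun n => (hdev n).add (memLp_const _)
  rw [← integral_discoverEstimator hp hpsum (fun n => (hh n).integrable one_le_two) b]
  calc _ ≤ ∫ z, ‖discoverEstimator p h b z - ∑ k, p k • b k‖ ^ 2 ∂clusterMixture p P :=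
        integral_norm_sub_integral_sq_le hD _
    _ = ∫ z, ‖h z.2 - b z.1‖ ^ 2 ∂clusterMixture p P := by
        simp only [discoverEstimator, add_sub_cancel_right]
    _ = ∑ n, p n * ∫ x, ‖h x - b n‖ ^ 2 ∂P n :=
        integral_clusterMixture hp fun n => (hdev n).integrable_norm_pow two_ne_zero

theorem discover_single_sample_variance_general {Θ : Type*} [PseudoMetricSpace Θ]
    {g : X → Θ → E} {δ : ℝ≥0} {θ θs : Θ} (hp : ∀ n, 0 ≤ p n) (hpsum : ∑ n, p n = 1)
    (hLip : ∀ n, ∀ᵐ x ∂P n, LipschitzWith δ (g x))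
    (hθ : ∀ n, AEStronglyMeasurable (g · θ) (P n)) (hθs : ∀ n, MemLp (g · θs) 2 (P n))
    (b : ι → E) :
    ∫ z, ‖discoverEstimator p (g · θ) b z - ∑ n, p n • ∫ x, g x θ ∂P n‖ ^ 2
        ∂clusterMixture p P ≤
      2 * δ ^ 2 * dist θ θs ^ 2 + ∑ n, p n * (2 * ∫ x, ‖g x θs‖ ^ 2 ∂P n) +
        2 * ∑ n, p n * ‖b n - ∫ x, g x θs ∂P n‖ ^ 2 := by
  have hcluster (n : ι) : ∫ x, ‖g x θ - b n‖ ^ 2 ∂P n ≤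
      2 * (δ * dist θ θs) ^ 2 +
        2 * (∫ x, ‖g x θs‖ ^ 2 ∂P n + ‖b n - ∫ x, g x θs ∂P n‖ ^ 2) := by
    rw [norm_sub_rev (b n)]
    grw [integral_norm_sub_sq_le_of_ae_lipschitzWith (hLip n) (hθs n),
      integral_norm_sub_sq_le_second_moment_add_bias_sq (hθs n)]
  calc _ ≤ ∑ n, p n * ∫ x, ‖g x θ - b n‖ ^ 2 ∂P n :=
        integral_norm_discoverEstimator_sub_mean_sq_le hp hpsum
          (fun n => memLp_of_ae_lipschitzWith (hLip n) (hθ n) (hθs n)) b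
    _ ≤ ∑ n, p n * (2 * (δ * dist θ θs) ^ 2 +
          2 * (∫ x, ‖g x θs‖ ^ 2 ∂P n + ‖b n - ∫ x, g x θs ∂P n‖ ^ 2)) :=
        sum_le_sum fun n _ => mul_le_mul_of_nonneg_left (hcluster n) (hp n)
    _ = _ := by
        simp only [mul_add, sum_add_distrib, ← sum_mul, hpsum, mul_sum]
        simp only [mul_left_comm (2 : ℝ)]
        ring

end Discover

/-- Single-sample Discover variance bound: for a sample `(n,x)` from the
joint distribution `Q(n,dx) = p_n ℙ_n(dx)`,
`E[‖D(n,x) − ḡ(θ)‖²] ≤ 4δ²‖θ − θ*‖² + ∑ p_n σ_n² + 2∑ p_n‖g⁽ⁿ⁾ − g_n(θ*)‖²`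
with `σ_n² = 2·E_{x∼ℙ_n}[‖g(x,θ*)‖²]`. -/
theorem discover_single_sample_variance
    {d : ℕ} {X : Type*} [MeasurableSpace X] {N : ℕ}
    (p : Fin N → ℝ) (P : Fin N → Measure X)
    [∀ n, IsProbabilityMeasure (P n)]
    (hp : ∀ n, 0 < p n) (hpsum : ∑ n, p n = 1)
    (g : X → EuclideanSpace ℝ (Fin d) → EuclideanSpace ℝ (Fin d))
    (hgmeas : ∀ θ', Measurable fun x => g x θ')
    (δ : ℝ≥0)
    (hLip : ∀ n, ∀ᵐ x ∂(P n), LipschitzWith δ (g x))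
    (gbar : Fin N → EuclideanSpace ℝ (Fin d) → EuclideanSpace ℝ (Fin d))
    (hgbar : ∀ n θ', gbar n θ' = ∫ x, g x θ' ∂(P n))
    (θs : EuclideanSpace ℝ (Fin d))
    (hcrit : ∑ n, p n • gbar n θs = 0)
    (θ : EuclideanSpace ℝ (Fin d))
    (gfull : EuclideanSpace ℝ (Fin d))
    (hgfull : gfull = ∑ n, p n • gbar n θ)
    -- the buffers and the Discover per-sample estimator
    (gb : Fin N → EuclideanSpace ℝ (Fin d))
    (D : Fin N × X → EuclideanSpace ℝ (Fin d))
    (hD : ∀ z : Fin N × X, D z = g z.2 θ - gb z.1 + ∑ k, p k • gb k)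
    -- the joint distribution Q on {1,…,N} × 𝒳
    (Q : Measure (Fin N × X))
    (hQ : Q = ∑ n, ENNReal.ofReal (p n) • (P n).map (fun x => (n, x)))
    -- the in-cluster variances
    (σsq : Fin N → ℝ)
    (hσ : ∀ n, σsq n = 2 * ∫ x, ‖g x θs‖ ^ 2 ∂(P n))
    -- integrability of all stated integrands
    (hint1 : ∀ n, Integrable (fun x => g x θ) (P n))
    (hint2 : ∀ n, Integrable (fun x => g x θs) (P n))
    (hint3 : ∀ n, Integrable (fun x => ‖g x θs‖ ^ 2) (P n))
    (hint4 : Integrable (fun z => ‖D z - gfull‖ ^ 2) Q) :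
    ∫ z, ‖D z - gfull‖ ^ 2 ∂Q ≤
      4 * (δ : ℝ) ^ 2 * ‖θ - θs‖ ^ 2 + (∑ n, p n * σsq n) +
        2 * ∑ n, p n * ‖gb n - gbar n θs‖ ^ 2 := by
  obtain rfl : gbar = fun n θ' => ∫ x, g x θ' ∂P n := funext₂ hgbar
  obtain rfl : σsq = fun n => 2 * ∫ x, ‖g x θs‖ ^ 2 ∂P n := funext hσ
  obtain rfl : D = discoverEstimator p (g · θ) gb := funext hD
  have hθs (n : Fin N) : MemLp (g · θs) 2 (P n) :=
    (memLp_two_iff_integrable_sq_norm (hint2 n).aestronglyMeasurable).2 (hint3 n)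
  have hbound := discover_single_sample_variance_general (fun n => (hp n).le) hpsum hLip
    (fun n => (hint1 n).aestronglyMeasurable) hθs gb
  rw [hQ, hgfull, ← dist_eq_norm θ θs]
  refine hbound.trans ?_
  gcongr
  norm_num
end

section
/- Lyapunov one-step recursion (key step in the proof of the paper's Theorem 1): let 0 < ν ≤ δ, α ∈ (0,1), m ≥ 1 an integer, C₂ ≥ 0, C₁ = 4δ², and suppose the step size satisfies 0 < μ ≤ min{νm/(3δ²(m + 5)), α/(6ν)}; set γ = 3μ²/(αm). If nonnegative real sequences (a_t) and (G_t) satisfy, for all t, a_{t+1} ≤ (1 − 2μν + μ²(δ² + C₁/m))·a_t + (μ²/m)·C₂ + (2μ²/m)·G_t and G_{t+1} ≤ (1 − α)·G_t + 3αδ²·a_t + α·C₂, then for all t: a_{t+1} + γ·G_{t+1} ≤ (1 − μν)·(a_t + γ·G_t) + (4μ²/m)·C₂. -/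
/-!
A weighted sum `a + γ * G` contracts by `ρ` as soon as each column of the matrix of the coupled
linear recursion does. The weight `γ = 3μ² / (αm)` solves `γ * α = 3 * (μ² / m)`, and this
identity produces every constant: the noise terms add up to `1 + 3 = 4` times `μ² / m`; the
`a`-column carries `4 + 3 * 3 = 13` times `μ²δ² / m`, so it contracts when
`μ * δ² * (m + 13) ≤ ν * m`; in the `G`-column the coupling `2μ² / m` uses up two thirds of `γ * α`,
and the remaining third covers `γ * μ * ν` when `3 * μ * ν ≤ α`.
-/

theorem add_mul_le_of_coupled_recursion {R : Type*} [CommSemiring R] [PartialOrder R]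
    [IsOrderedRing R] {p q r s c d ρ γ a G a' G' : R}
    (hγ : 0 ≤ γ) (ha : 0 ≤ a) (hG : 0 ≤ G)
    (ha' : a' ≤ p * a + c + q * G) (hG' : G' ≤ s * G + r * a + d)
    (ha_coeff : p + γ * r ≤ ρ) (hG_coeff : q + γ * s ≤ ρ * γ) :
    a' + γ * G' ≤ ρ * (a + γ * G) + (c + γ * d) :=
  calc
    a' + γ * G' ≤ p * a + c + q * G + γ * (s * G + r * a + d) := by gcongr
    _ = (p + γ * r) * a + (q + γ * s) * G + (c + γ * d) := by ring
    _ ≤ ρ * a + ρ * γ * G + (c + γ * d) := by gcongr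
    _ = ρ * (a + γ * G) + (c + γ * d) := by ring

section

variable {K : Type*} [Field K] [LinearOrder K] [IsStrictOrderedRing K] {ν δ α μ m γ : K}

theorem iterate_coeff_le (hμ : 0 ≤ μ) (hm : 0 < m) (hγα : γ * α = 3 * (μ ^ 2 / m))
    (hstep : μ * δ ^ 2 * (m + 13) ≤ ν * m) :
    1 - 2 * μ * ν + μ ^ 2 * (δ ^ 2 + 4 * δ ^ 2 / m) + γ * (3 * α * δ ^ 2) ≤ 1 - μ * ν :=
  calc
    1 - 2 * μ * ν + μ ^ 2 * (δ ^ 2 + 4 * δ ^ 2 / m) + γ * (3 * α * δ ^ 2)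
        = 1 - 2 * μ * ν + μ ^ 2 * (δ ^ 2 + 4 * δ ^ 2 / m) + 3 * (γ * α) * δ ^ 2 := by ring
    _ = 1 - 2 * μ * ν + μ * (μ * δ ^ 2 * (m + 13) / m) := by
      rw [hγα]
      field_simp
      ring
    _ ≤ 1 - 2 * μ * ν + μ * ν := by
      gcongr
      exact (div_le_iff₀ hm).2 hstep
    _ = 1 - μ * ν := by ring

theorem buffer_coeff_le (hγ : 0 ≤ γ) (hγα : γ * α = 3 * (μ ^ 2 / m)) (hstep : 3 * μ * ν ≤ α) :
    2 * μ ^ 2 / m + γ * (1 - α) ≤ (1 - μ * ν) * γ := by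
  have hthird : γ * (3 * μ * ν) ≤ 3 * (μ ^ 2 / m) :=
    (mul_le_mul_of_nonneg_left hstep hγ).trans_eq hγα
  have hcoupling : 2 * μ ^ 2 / m = 2 * (μ ^ 2 / m) := mul_div_assoc ..
  linarith

theorem mul_sq_mul_add_le_of_le_div (hδ : δ ≠ 0) (hμ : 0 ≤ μ) (hm : 0 ≤ m)
    (h : μ ≤ ν * m / (3 * δ ^ 2 * (m + 5))) : μ * δ ^ 2 * (m + 13) ≤ ν * m :=
  calc
    μ * δ ^ 2 * (m + 13) ≤ μ * δ ^ 2 * (3 * (m + 5)) := by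
      gcongr
      linarith
    _ = μ * (3 * δ ^ 2 * (m + 5)) := by ring
    _ ≤ ν * m := (le_div_iff₀ (by positivity)).1 h

theorem three_mul_mul_le_of_le_div (hν : 0 < ν) (hμ : 0 ≤ μ) (h : μ ≤ α / (6 * ν)) :
    3 * μ * ν ≤ α := by
  have hsix : μ * (6 * ν) ≤ α := (le_div_iff₀ (by positivity)).1 h
  have hμν : 0 ≤ μ * ν := by positivity
  linarith

theorem lyapunov_one_step_recursion_general {C₁ C₂ a G a' G' : K}
    (hα : 0 < α) (hm : 0 < m) (hμ : 0 ≤ μ) (hC₁ : C₁ = 4 * δ ^ 2)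
    (hγ : γ = 3 * μ ^ 2 / (α * m))
    (hstep_iterate : μ * δ ^ 2 * (m + 13) ≤ ν * m) (hstep_buffer : 3 * μ * ν ≤ α)
    (ha : 0 ≤ a) (hG : 0 ≤ G)
    (ha' : a' ≤ (1 - 2 * μ * ν + μ ^ 2 * (δ ^ 2 + C₁ / m)) * a + (μ ^ 2 / m) * C₂
      + (2 * μ ^ 2 / m) * G)
    (hG' : G' ≤ (1 - α) * G + 3 * α * δ ^ 2 * a + α * C₂) :
    a' + γ * G' ≤ (1 - μ * ν) * (a + γ * G) + (4 * μ ^ 2 / m) * C₂ := by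
  subst hC₁
  have hγ_nonneg : 0 ≤ γ := by rw [hγ]; positivity
  have hγα : γ * α = 3 * (μ ^ 2 / m) := by rw [hγ]; field_simp
  have hnoise : μ ^ 2 / m * C₂ + γ * (α * C₂) = 4 * μ ^ 2 / m * C₂ := by
    rw [← mul_assoc, hγα]
    ring
  rw [← hnoise]
  exact add_mul_le_of_coupled_recursion hγ_nonneg ha hG ha' hG'
    (iterate_coeff_le hμ hm hγα hstep_iterate) (buffer_coeff_le hγ_nonneg hγα hstep_buffer)

end

/-- Lyapunov one-step recursion (key step in the proof of the paper's
Theorem 1): under the step-size conditions, the Lyapunov function `a_t + γG_t` of the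
Discover algorithm contracts by a factor `1 − μν` up to the additive term `(4μ²/m)C₂`. -/
theorem lyapunov_one_step_recursion
    (ν δ α μ : ℝ) (m : ℕ) (C₁ C₂ : ℝ)
    (hν : 0 < ν) (hνδ : ν ≤ δ) (hα0 : 0 < α) (hα1 : α < 1) (hm : 1 ≤ m)
    (hC₁ : C₁ = 4 * δ ^ 2) (hC₂ : 0 ≤ C₂)
    (hμ0 : 0 < μ) (hμ : μ ≤ min (ν * m / (3 * δ ^ 2 * (m + 5))) (α / (6 * ν)))
    (γ : ℝ) (hγ : γ = 3 * μ ^ 2 / (α * m))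
    (a G : ℕ → ℝ) (ha : ∀ t, 0 ≤ a t) (hG : ∀ t, 0 ≤ G t)
    (hrec1 : ∀ t, a (t + 1) ≤
      (1 - 2 * μ * ν + μ ^ 2 * (δ ^ 2 + C₁ / m)) * a t + (μ ^ 2 / m) * C₂
        + (2 * μ ^ 2 / m) * G t)
    (hrec2 : ∀ t, G (t + 1) ≤ (1 - α) * G t + 3 * α * δ ^ 2 * a t + α * C₂) :
    ∀ t, a (t + 1) + γ * G (t + 1) ≤
      (1 - μ * ν) * (a t + γ * G t) + (4 * μ ^ 2 / m) * C₂ := by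
  obtain ⟨hμ_iterate, hμ_buffer⟩ := le_min_iff.1 hμ
  exact fun t => lyapunov_one_step_recursion_general hα0 (Nat.cast_pos.2 hm) hμ0.le hC₁ hγ
    (mul_sq_mul_add_le_of_le_div (hν.trans_le hνδ).ne' hμ0.le m.cast_nonneg hμ_iterate)
    (three_mul_mul_le_of_le_div hν hμ0.le hμ_buffer) (ha t) (hG t) (hrec1 t) (hrec2 t)
end

section
/- Theorem 1 (convergence of Discover): let 0 < ν ≤ δ, α ∈ (0,1), m ≥ 1 an integer, σ_in² ≥ 0, C₁ = 4δ², and suppose the step size satisfies 0 < μ ≤ min{νm/(3δ²(m + 5)), α/(6ν)} and μν < 1; set γ = 3μ²/(αm) and q = 1 − μν ∈ (0,1). If nonnegative real sequences (a_t) and (G_t) satisfy, for all t, a_{t+1} ≤ (1 − 2μν + μ²(δ² + C₁/m))·a_t + (μ²/m)·σ_in² + (2μ²/m)·G_t and G_{t+1} ≤ (1 − α)·G_t + 3αδ²·a_t + α·σ_in², then for every t ≥ 0: a_t ≤ q^t·(a_0 + γ·G_0) + (4μ/(νm))·σ_in². -/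
/-!
The proof tracks the Lyapunov function `V t = a t + γ * G t`. The weight `γ = 3μ²/(αm)` makes the
buffer decay `γ α G` equal to `3μ²/m * G`; of this, `2μ²/m * G` absorbs the buffer error entering
the recursion of `a`, and the remaining `μ²/m * G` pays for the contraction of the `γ G` part by
`1 - μν`. The step-size bound does the same for the `a` part, so that
`V (t + 1) ≤ (1 - μν) * V t + 4μ²σ/m`, and `4μσ/(νm)` is the fixed point of this affine recursion.
-/

theorem le_pow_mul_add_of_succ_le_mul_add {R : Type*} [CommSemiring R] [PartialOrder R]
    [IsOrderedRing R] {u : ℕ → R} {q b K : R} (hq : 0 ≤ q) (hK : 0 ≤ K) (hfix : q * K + b ≤ K)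
    (hu : ∀ t, u (t + 1) ≤ q * u t + b) (t : ℕ) : u t ≤ q ^ t * u 0 + K := by
  induction t with
  | zero => simpa only [pow_zero, one_mul] using le_add_of_nonneg_right hK
  | succ t ih =>
    calc u (t + 1) ≤ q * u t + b := hu t
      _ ≤ q * (q ^ t * u 0 + K) + b := by gcongr
      _ = q ^ (t + 1) * u 0 + (q * K + b) := by ring
      _ ≤ q ^ (t + 1) * u 0 + K := by gcongr

theorem weighted_sum_le_of_coupled_le {R : Type*} [CommSemiring R] [PartialOrder R]
    [IsOrderedRing R] {x y x' y' A B C D b d γ q : R} (hx : 0 ≤ x) (hy : 0 ≤ y) (hγ : 0 ≤ γ)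
    (hx' : x' ≤ A * x + b + B * y) (hy' : y' ≤ D * y + C * x + d)
    (hxcoeff : A + γ * C ≤ q) (hycoeff : B + γ * D ≤ q * γ) :
    x' + γ * y' ≤ q * (x + γ * y) + (b + γ * d) :=
  calc x' + γ * y' ≤ (A * x + b + B * y) + γ * (D * y + C * x + d) := by gcongr
    _ = (A + γ * C) * x + (B + γ * D) * y + (b + γ * d) := by ring
    _ ≤ q * x + q * γ * y + (b + γ * d) := by gcongr
    _ = q * (x + γ * y) + (b + γ * d) := by ring

namespace Discover

theorem noise_floor_fixed {𝕜 : Type*} [Field 𝕜] {ν α μ m : 𝕜} (hν : ν ≠ 0) (hα : α ≠ 0)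
    (hm : m ≠ 0) (σ : 𝕜) :
    (1 - μ * ν) * (4 * μ / (ν * m) * σ) + (μ ^ 2 / m * σ + 3 * μ ^ 2 / (α * m) * (α * σ)) =
      4 * μ / (ν * m) * σ := by
  field_simp
  ring

variable {𝕜 : Type*} [Field 𝕜] [LinearOrder 𝕜] [IsStrictOrderedRing 𝕜] {ν δ α μ m C₁ : 𝕜}

theorem error_coeff_le (hα : α ≠ 0) (hm : 0 < m) (hμ : 0 ≤ μ)
    (hstep : μ * (δ ^ 2 * (m + 9) + C₁) ≤ ν * m) :
    1 - 2 * μ * ν + μ ^ 2 * (δ ^ 2 + C₁ / m) + 3 * μ ^ 2 / (α * m) * (3 * α * δ ^ 2) ≤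
      1 - μ * ν :=
  calc 1 - 2 * μ * ν + μ ^ 2 * (δ ^ 2 + C₁ / m) + 3 * μ ^ 2 / (α * m) * (3 * α * δ ^ 2)
      = 1 - 2 * μ * ν + μ * (μ * (δ ^ 2 * (m + 9) + C₁) / m) := by field_simp; ring
    _ ≤ 1 - 2 * μ * ν + μ * ν := by gcongr; exact (div_le_iff₀ hm).2 hstep
    _ = 1 - μ * ν := by ring

theorem buffer_coeff_le (hα : 0 < α) (hm : 0 < m) (hstep : 3 * (μ * ν) ≤ α) :
    2 * μ ^ 2 / m + 3 * μ ^ 2 / (α * m) * (1 - α) ≤ (1 - μ * ν) * (3 * μ ^ 2 / (α * m)) :=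
  calc 2 * μ ^ 2 / m + 3 * μ ^ 2 / (α * m) * (1 - α)
      = 3 * μ ^ 2 / (α * m) - μ ^ 2 / (α * m) * α := by field_simp; ring
    _ ≤ 3 * μ ^ 2 / (α * m) - μ ^ 2 / (α * m) * (3 * (μ * ν)) := by gcongr
    _ = (1 - μ * ν) * (3 * μ ^ 2 / (α * m)) := by ring

theorem step_size_mul_le (hδ : δ ≠ 0) (hm : 0 ≤ m) (hμ0 : 0 ≤ μ)
    (hμ : μ ≤ ν * m / (3 * δ ^ 2 * (m + 5))) :
    μ * (δ ^ 2 * (m + 9) + 4 * δ ^ 2) ≤ ν * m :=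
  calc μ * (δ ^ 2 * (m + 9) + 4 * δ ^ 2) = μ * (δ ^ 2 * (m + 13)) := by ring
    _ ≤ μ * (δ ^ 2 * (3 * (m + 5))) := by gcongr; linarith
    _ = μ * (3 * δ ^ 2 * (m + 5)) := by ring
    _ ≤ ν * m := (le_div_iff₀ (by positivity)).1 hμ

theorem three_mul_step_size_le (hν : 0 < ν) (hμ0 : 0 ≤ μ) (hμ : μ ≤ α / (6 * ν)) :
    3 * (μ * ν) ≤ α :=
  calc 3 * (μ * ν) ≤ 6 * (μ * ν) := by gcongr; norm_num
    _ = μ * (6 * ν) := by ring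
    _ ≤ α := (le_div_iff₀ (by positivity)).1 hμ

end Discover

theorem discover_convergence_general {𝕜 : Type*} [Field 𝕜] [LinearOrder 𝕜]
    [IsStrictOrderedRing 𝕜] {ν δ α μ m C₁ σin γ q : 𝕜}
    (hν : 0 < ν) (hα : 0 < α) (hm : 0 < m) (hσin : 0 ≤ σin) (hμ : 0 < μ)
    (herror : μ * (δ ^ 2 * (m + 9) + C₁) ≤ ν * m) (hbuffer : 3 * (μ * ν) ≤ α) (hμν : μ * ν < 1)
    (hγ : γ = 3 * μ ^ 2 / (α * m)) (hq : q = 1 - μ * ν)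
    {a G : ℕ → 𝕜} (ha : ∀ t, 0 ≤ a t) (hG : ∀ t, 0 ≤ G t)
    (hrec1 : ∀ t, a (t + 1) ≤
      (1 - 2 * μ * ν + μ ^ 2 * (δ ^ 2 + C₁ / m)) * a t + (μ ^ 2 / m) * σin
        + (2 * μ ^ 2 / m) * G t)
    (hrec2 : ∀ t, G (t + 1) ≤ (1 - α) * G t + 3 * α * δ ^ 2 * a t + α * σin) :
    (0 < q ∧ q < 1) ∧
      ∀ t, a t ≤ q ^ t * (a 0 + γ * G 0) + (4 * μ / (ν * m)) * σin := by
  subst hγ hq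
  have hq0 : 0 < 1 - μ * ν := sub_pos.2 hμν
  have hγ0 : 0 ≤ 3 * μ ^ 2 / (α * m) := by positivity
  let V : ℕ → 𝕜 := fun t ↦ a t + 3 * μ ^ 2 / (α * m) * G t
  have V_succ_le (t : ℕ) : V (t + 1) ≤
      (1 - μ * ν) * V t + (μ ^ 2 / m * σin + 3 * μ ^ 2 / (α * m) * (α * σin)) :=
    weighted_sum_le_of_coupled_le (ha t) (hG t) hγ0 (hrec1 t) (hrec2 t)
      (Discover.error_coeff_le hα.ne' hm hμ.le herror) (Discover.buffer_coeff_le hα hm hbuffer)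
  have fixed := Discover.noise_floor_fixed (μ := μ) hν.ne' hα.ne' hm.ne' σin
  refine ⟨⟨hq0, sub_lt_self 1 (mul_pos hμ hν)⟩, fun t ↦ ?_⟩
  calc a t ≤ V t := le_add_of_nonneg_right (mul_nonneg hγ0 (hG t))
    _ ≤ (1 - μ * ν) ^ t * V 0 + 4 * μ / (ν * m) * σin :=
      le_pow_mul_add_of_succ_le_mul_add hq0.le (by positivity) fixed.le V_succ_le t

/-- Theorem 1 (convergence of Discover): under the step-size conditions,
the expected squared error of the Discover iterates satisfies
`a_t ≤ q^t (a_0 + γ G_0) + (4μ/(νm)) σ_in²` with contraction factor `q = 1 − μν ∈ (0,1)`. -/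
theorem discover_convergence
    (ν δ α μ : ℝ) (m : ℕ) (C₁ σin : ℝ)
    (hν : 0 < ν) (hνδ : ν ≤ δ) (hα0 : 0 < α) (hα1 : α < 1) (hm : 1 ≤ m)
    (hC₁ : C₁ = 4 * δ ^ 2) (hσin : 0 ≤ σin)
    (hμ0 : 0 < μ) (hμ : μ ≤ min (ν * m / (3 * δ ^ 2 * (m + 5))) (α / (6 * ν)))
    (hμν : μ * ν < 1)
    (γ q : ℝ) (hγ : γ = 3 * μ ^ 2 / (α * m)) (hq : q = 1 - μ * ν)
    (a G : ℕ → ℝ) (ha : ∀ t, 0 ≤ a t) (hG : ∀ t, 0 ≤ G t)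
    (hrec1 : ∀ t, a (t + 1) ≤
      (1 - 2 * μ * ν + μ ^ 2 * (δ ^ 2 + C₁ / m)) * a t + (μ ^ 2 / m) * σin
        + (2 * μ ^ 2 / m) * G t)
    (hrec2 : ∀ t, G (t + 1) ≤ (1 - α) * G t + 3 * α * δ ^ 2 * a t + α * σin) :
    (0 < q ∧ q < 1) ∧
      ∀ t, a t ≤ q ^ t * (a 0 + γ * G 0) + (4 * μ / (ν * m)) * σin := by
  have hm0 : (0 : ℝ) < m := Nat.cast_pos.2 hm
  have herror := Discover.step_size_mul_le (hν.trans_le hνδ).ne' hm0.le hμ0.le (le_min_iff.1 hμ).1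
  have hbuffer := Discover.three_mul_step_size_le hν hμ0.le (le_min_iff.1 hμ).2
  exact discover_convergence_general hν hα0 hm0 hσin hμ0 (hC₁ ▸ herror) hbuffer hμν hγ hq ha hG
    hrec1 hrec2
end

section
/- Steady-state bound (limsup part of Theorem 1): under the hypotheses of Theorem 1 — i.e., 0 < ν ≤ δ, α ∈ (0,1), m ≥ 1, σ_in² ≥ 0, C₁ = 4δ², 0 < μ ≤ min{νm/(3δ²(m + 5)), α/(6ν)}, μν < 1, γ = 3μ²/(αm), and nonnegative sequences (a_t), (G_t) satisfying a_{t+1} ≤ (1 − 2μν + μ²(δ² + C₁/m))·a_t + (μ²/m)·σ_in² + (2μ²/m)·G_t and G_{t+1} ≤ (1 − α)·G_t + 3αδ²·a_t + α·σ_in² for all t — the sequence (a_t) satisfies limsup_{t→∞} a_t ≤ (4μ/(νm))·σ_in²; in particular, the asymptotic expected squared error is O(μ·σ_in²/m) and the between-cluster variance does not appear in the limit. -/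
open Filter

/-!
The quantity `V t = a t + γ * G t` with `γ = 3 * μ ^ 2 / (α * m)` is a Lyapunov function for the
coupled recursion. One step of the buffer recursion damps `γ * G t` by `α * γ = 3 * μ ^ 2 / m`;
two thirds of this absorb the term `2 * μ ^ 2 / m * G t` coming from the iterate, and the remaining
third is at least `μ * ν * γ`. The step-size condition makes the coefficient of `a t` at most
`1 - μ * ν` as well, so `V (t + 1) ≤ (1 - μ * ν) * V t + 4 * μ ^ 2 / m * σin`, and `a ≤ V` is
asymptotically at most the fixed point `4 * μ / (ν * m) * σin` of this affine map.
-/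

section AffineRecursion

variable {q c : ℝ}

theorem le_pow_mul_sub_add_of_le_mul_add {u : ℕ → ℝ} (hq0 : 0 ≤ q) (hq1 : q ≠ 1)
    (hu : ∀ t, u (t + 1) ≤ q * u t + c) (t : ℕ) :
    u t ≤ q ^ t * (u 0 - c / (1 - q)) + c / (1 - q) := by
  have fixed_point : q * (c / (1 - q)) + c = c / (1 - q) := by
    have : 1 - q ≠ 0 := sub_ne_zero.2 hq1.symm
    field_simp
    ring
  have geometric := le_geom (u := fun s ↦ u s - c / (1 - q)) hq0 t
    fun s _ ↦ by linarith [hu s]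
  linarith

theorem limsup_le_div_one_sub_of_le_mul_add {a u : ℕ → ℝ} (hq0 : 0 ≤ q) (hq1 : q < 1)
    (ha : IsCoboundedUnder (· ≤ ·) atTop a) (hau : ∀ t, a t ≤ u t)
    (hu : ∀ t, u (t + 1) ≤ q * u t + c) :
    limsup a atTop ≤ c / (1 - q) := by
  have majorant_tendsto : Tendsto (fun t ↦ q ^ t * (u 0 - c / (1 - q)) + c / (1 - q)) atTop
      (nhds (c / (1 - q))) := by
    simpa using ((tendsto_pow_atTop_nhds_zero_of_lt_one hq0 hq1).mul_const
      (u 0 - c / (1 - q))).add_const (c / (1 - q))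
  rw [← majorant_tendsto.limsup_eq]
  exact limsup_le_limsup
    (.of_forall fun t ↦ (hau t).trans (le_pow_mul_sub_add_of_le_mul_add hq0 hq1.ne hu t))
    ha majorant_tendsto.isBoundedUnder_le

/- The row vector `(1, w)` is a sub-eigenvector, with eigenvalue `q`, of the coefficient matrix
`!![r, s; k, l]`, so `a + w * b` obeys a scalar affine recursion. -/
theorem limsup_le_of_coupled_recursion {a b : ℕ → ℝ} {r s k l d w : ℝ}
    (hq0 : 0 ≤ q) (hq1 : q < 1) (hw : 0 ≤ w) (hrk : r + w * k ≤ q) (hsl : s + w * l ≤ q * w)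
    (ha : ∀ t, 0 ≤ a t) (hb : ∀ t, 0 ≤ b t)
    (hrec_a : ∀ t, a (t + 1) ≤ r * a t + s * b t + c)
    (hrec_b : ∀ t, b (t + 1) ≤ k * a t + l * b t + d) :
    limsup a atTop ≤ (c + w * d) / (1 - q) := by
  refine limsup_le_div_one_sub_of_le_mul_add (u := fun t ↦ a t + w * b t) hq0 hq1
    (isCoboundedUnder_le_of_le atTop ha) (fun t ↦ le_add_of_nonneg_right (mul_nonneg hw (hb t)))
    fun t ↦ ?_
  calc a (t + 1) + w * b (t + 1)
      ≤ (r * a t + s * b t + c) + w * (k * a t + l * b t + d) := by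
        gcongr
        · exact hrec_a t
        · exact hrec_b t
    _ = (r + w * k) * a t + (s + w * l) * b t + (c + w * d) := by ring
    _ ≤ q * a t + q * w * b t + (c + w * d) := by
        gcongr
        · exact ha t
        · exact hb t
    _ = q * (a t + w * b t) + (c + w * d) := by ring

end AffineRecursion

/-- The weight `γ` of the buffer error `G` in the Lyapunov function `a + γ * G` of Discover. The
batch size `m` is taken real. -/
noncomputable def bufferWeight (α μ m : ℝ) : ℝ := 3 * μ ^ 2 / (α * m)

section StepSize

variable {ν δ α μ m C₁ : ℝ}

theorem bufferWeight_nonneg (hα : 0 ≤ α) (hm : 0 ≤ m) : 0 ≤ bufferWeight α μ m := by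
  unfold bufferWeight
  positivity

theorem bufferWeight_mul (hα : α ≠ 0) : bufferWeight α μ m * α = 3 * μ ^ 2 / m := by
  unfold bufferWeight
  field_simp

theorem iterate_coeff_add_bufferWeight_mul_le (hα : α ≠ 0) (hm : 0 < m) (hμ : 0 ≤ μ)
    (hstep : μ * (δ ^ 2 * (m + 9) + C₁) ≤ ν * m) :
    1 - 2 * μ * ν + μ ^ 2 * (δ ^ 2 + C₁ / m) + bufferWeight α μ m * (3 * α * δ ^ 2)
      ≤ 1 - μ * ν := by
  calc 1 - 2 * μ * ν + μ ^ 2 * (δ ^ 2 + C₁ / m) + bufferWeight α μ m * (3 * α * δ ^ 2)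
      = 1 - 2 * μ * ν + μ ^ 2 * (δ ^ 2 + C₁ / m)
          + 3 * (bufferWeight α μ m * α) * δ ^ 2 := by ring
    _ = 1 - 2 * μ * ν + μ * (μ * (δ ^ 2 * (m + 9) + C₁) / m) := by
        rw [bufferWeight_mul hα]
        field_simp
        ring
    _ ≤ 1 - 2 * μ * ν + μ * ν := by
        gcongr
        exact (div_le_iff₀ hm).2 hstep
    _ = 1 - μ * ν := by ring

theorem buffer_coeff_add_bufferWeight_mul_le (hα : 0 < α) (hm : 0 ≤ m)
    (hstep : 3 * (μ * ν) ≤ α) :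
    2 * μ ^ 2 / m + bufferWeight α μ m * (1 - α) ≤ (1 - μ * ν) * bufferWeight α μ m := by
  calc 2 * μ ^ 2 / m + bufferWeight α μ m * (1 - α)
      = 2 / 3 * (3 * μ ^ 2 / m) + bufferWeight α μ m * (1 - α) := by ring
    _ = (1 - α / 3) * bufferWeight α μ m := by
        rw [← bufferWeight_mul hα.ne']
        ring
    _ ≤ (1 - μ * ν) * bufferWeight α μ m := by
        gcongr
        · exact bufferWeight_nonneg hα.le hm
        · linarith

theorem iterate_stepSize_of_le_div (hδ : δ ≠ 0) (hm : 0 ≤ m) (hμ0 : 0 ≤ μ)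
    (hμ : μ ≤ ν * m / (3 * δ ^ 2 * (m + 5))) :
    μ * (δ ^ 2 * (m + 9) + 4 * δ ^ 2) ≤ ν * m :=
  calc μ * (δ ^ 2 * (m + 9) + 4 * δ ^ 2)
      = μ * (δ ^ 2 * (m + 13)) := by ring
    _ ≤ μ * (δ ^ 2 * (3 * (m + 5))) := by gcongr; linarith
    _ = μ * (3 * δ ^ 2 * (m + 5)) := by ring
    _ ≤ ν * m := (le_div_iff₀ (by positivity)).1 hμ

theorem buffer_stepSize_of_le_div (hν : 0 < ν) (hμ0 : 0 ≤ μ) (hμ : μ ≤ α / (6 * ν)) :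
    3 * (μ * ν) ≤ α := by
  have six_mul_le : μ * (6 * ν) ≤ α := (le_div_iff₀ (by positivity)).1 hμ
  linarith [mul_nonneg hμ0 hν.le]

end StepSize

theorem discover_steady_state_general {ν δ α μ m C₁ σin : ℝ}
    (hν : 0 < ν) (hα : 0 < α) (hm : 0 < m) (hμ : 0 < μ) (hμν : μ * ν ≤ 1)
    (hstep_iterate : μ * (δ ^ 2 * (m + 9) + C₁) ≤ ν * m) (hstep_buffer : 3 * (μ * ν) ≤ α)
    {a G : ℕ → ℝ} (ha : ∀ t, 0 ≤ a t) (hG : ∀ t, 0 ≤ G t)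
    (hrec_a : ∀ t, a (t + 1) ≤
      (1 - 2 * μ * ν + μ ^ 2 * (δ ^ 2 + C₁ / m)) * a t + (μ ^ 2 / m) * σin
        + (2 * μ ^ 2 / m) * G t)
    (hrec_G : ∀ t, G (t + 1) ≤ (1 - α) * G t + 3 * α * δ ^ 2 * a t + α * σin) :
    limsup a atTop ≤ (4 * μ / (ν * m)) * σin := by
  have limsup_le := limsup_le_of_coupled_recursion (q := 1 - μ * ν)
    (sub_nonneg.2 hμν) (sub_lt_self 1 (mul_pos hμ hν)) (bufferWeight_nonneg hα.le hm.le)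
    (iterate_coeff_add_bufferWeight_mul_le hα.ne' hm hμ.le hstep_iterate)
    (buffer_coeff_add_bufferWeight_mul_le hα hm.le hstep_buffer) ha hG
    (fun t ↦ (hrec_a t).trans_eq (add_right_comm _ _ _))
    (fun t ↦ (hrec_G t).trans_eq (by rw [add_comm ((1 - α) * G t)]))
  have fixed_point : (μ ^ 2 / m * σin + bufferWeight α μ m * (α * σin)) / (1 - (1 - μ * ν))
      = 4 * μ / (ν * m) * σin := by
    rw [← mul_assoc, bufferWeight_mul hα.ne', sub_sub_cancel]
    field_simp
    ring
  exact limsup_le.trans_eq fixed_point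

/-- Steady-state bound (limsup part of the paper's Theorem 1): under the
hypotheses of Theorem 1, `limsup_{t→∞} a_t ≤ (4μ/(νm))·σ_in²`; the between-cluster
variance does not appear in the limit. -/
theorem discover_steady_state
    (ν δ α μ : ℝ) (m : ℕ) (C₁ σin : ℝ)
    (hν : 0 < ν) (hνδ : ν ≤ δ) (hα0 : 0 < α) (hα1 : α < 1) (hm : 1 ≤ m)
    (hC₁ : C₁ = 4 * δ ^ 2) (hσin : 0 ≤ σin)
    (hμ0 : 0 < μ) (hμ : μ ≤ min (ν * m / (3 * δ ^ 2 * (m + 5))) (α / (6 * ν)))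
    (hμν : μ * ν < 1)
    (γ : ℝ) (hγ : γ = 3 * μ ^ 2 / (α * m))
    (a G : ℕ → ℝ) (ha : ∀ t, 0 ≤ a t) (hG : ∀ t, 0 ≤ G t)
    (hrec1 : ∀ t, a (t + 1) ≤
      (1 - 2 * μ * ν + μ ^ 2 * (δ ^ 2 + C₁ / m)) * a t + (μ ^ 2 / m) * σin
        + (2 * μ ^ 2 / m) * G t)
    (hrec2 : ∀ t, G (t + 1) ≤ (1 - α) * G t + 3 * α * δ ^ 2 * a t + α * σin) :
    limsup a atTop ≤ (4 * μ / (ν * m)) * σin := by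
  subst hC₁
  exact discover_steady_state_general hν hα0 (Nat.cast_pos.2 hm) hμ0 hμν.le
    (iterate_stepSize_of_le_div (hν.trans_le hνδ).ne' m.cast_nonneg hμ0.le
      (hμ.trans (min_le_left _ _)))
    (buffer_stepSize_of_le_div hν hμ0.le (hμ.trans (min_le_right _ _))) ha hG hrec1 hrec2
end
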